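/- arXiv:1811.02420 — 2 statements merged into one kernel-verified Lean document; each statement's English description precedes it below -/
import Mathlib

section
/- For any graphs G and H, χ_ℓ(G □ H) ≤ min{χ_ℓ(G) + col(H), col(G) + χ_ℓ(H)} − 1, where col denotes the coloring number (degeneracy plus one). -/
open SimpleGraph

/-- A proper coloring of `G` from the list assignment `L`. -/
def IsProperListColoring {V : Type*} (G : SimpleGraph V) (L : V → Finset ℕ) (f : V → ℕ) : Prop :=
  (∀ v, f v ∈ L v) ∧ ∀ ⦃v w⦄, G.Adj v w → f v ≠ f w

/-- `G` is `k`-choosable: every `k`-assignment admits a proper coloring. -/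
def Choosable {V : Type*} (G : SimpleGraph V) (k : ℕ) : Prop :=
  ∀ L : V → Finset ℕ, (∀ v, (L v).card = k) → ∃ f, IsProperListColoring G L f

/-- The list chromatic number: the least `k` such that `G` is `k`-choosable. -/
noncomputable def listChromaticNumber {V : Type*} (G : SimpleGraph V) : ℕ :=
  sInf {k | Choosable G k}

/-- The list color function `P_ℓ(G,k)`: the minimum number of proper `L`-colorings
over all `k`-assignments `L`. -/
noncomputable def listColorFunction {V : Type*} (G : SimpleGraph V) (k : ℕ) : ℕ :=
  sInf {n | ∃ L : V → Finset ℕ, (∀ v, (L v).card = k) ∧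
    n = Nat.card {f : V → ℕ // IsProperListColoring G L f}}

/-- `G` is strong `k`-chromatic-choosable: `χ(G) = k` and every `(k-1)`-assignment
admitting no proper coloring is constant. -/
def StrongChromChoosable {V : Type*} (G : SimpleGraph V) (k : ℕ) : Prop :=
  G.chromaticNumber = k ∧
  ∀ L : V → Finset ℕ, (∀ v, (L v).card = k - 1) →
    (¬ ∃ f, IsProperListColoring G L f) → ∀ v w, L v = L w

/-- The coloring number of G: the least d for which there is an ordering of the
vertices in which every vertex has fewer than d earlier neighbors. -/
noncomputable def coloringNumber {V : Type*} [Fintype V] (G : SimpleGraph V) : ℕ :=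
  sInf {d | ∃ e : V ≃ Fin (Fintype.card V),
    ∀ i : V, Nat.card {j : V // G.Adj i j ∧ e j < e i} < d}

theorem Choosable.exists_of_le_card {V : Type*} {G : SimpleGraph V} {k : ℕ}
    (h : Choosable G k) (L : V → Finset ℕ) (hL : ∀ v, k ≤ (L v).card) :
    ∃ f, IsProperListColoring G L f := by
  choose L' hsub hcard using fun v => Finset.exists_subset_card_eq (hL v)
  obtain ⟨f, hmem, hne⟩ := h L' hcard
  exact ⟨f, fun v => hsub v (hmem v), hne⟩

theorem Choosable.of_iso {V W : Type*} {G : SimpleGraph V} {H : SimpleGraph W} {k : ℕ}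
    (φ : G ≃g H) (h : Choosable G k) : Choosable H k := by
  intro L hL
  obtain ⟨f, hmem, hne⟩ := h (fun v => L (φ v)) fun v => hL _
  refine ⟨fun w => f (φ.symm w), fun w => ?_, fun v w hvw => hne (φ.symm.map_adj_iff.2 hvw)⟩
  simpa using hmem (φ.symm w)

/-- Lists as large as the vertex set admit a system of distinct representatives. -/
theorem choosable_card {V : Type*} [Fintype V] (G : SimpleGraph V) :
    Choosable G (Fintype.card V) := by
  classical
  intro L hL
  have hall : ∀ s : Finset V, s.card ≤ (s.biUnion L).card := by
    intro s
    rcases s.eq_empty_or_nonempty with rfl | ⟨v, hv⟩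
    · simp
    · calc s.card ≤ Fintype.card V := s.card_le_univ
        _ = (L v).card := (hL v).symm
        _ ≤ (s.biUnion L).card := Finset.card_le_card (Finset.subset_biUnion_of_mem L hv)
  obtain ⟨f, hinj, hmem⟩ := (Finset.all_card_le_biUnion_card_iff_exists_injective L).1 hall
  exact ⟨f, hmem, fun v w hvw => hinj.ne hvw.ne⟩

theorem choosable_listChromaticNumber {V : Type*} [Fintype V] (G : SimpleGraph V) :
    Choosable G (listChromaticNumber G) :=
  Nat.sInf_mem (s := {k | Choosable G k}) ⟨_, choosable_card G⟩

theorem listChromaticNumber_le {V : Type*} {G : SimpleGraph V} {k : ℕ} (h : Choosable G k) :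
    listChromaticNumber G ≤ k :=
  Nat.sInf_le h

theorem listChromaticNumber_eq_of_iso {V W : Type*} {G : SimpleGraph V} {H : SimpleGraph W}
    (φ : G ≃g H) : listChromaticNumber G = listChromaticNumber H :=
  congrArg sInf (Set.ext fun _ => ⟨Choosable.of_iso φ, Choosable.of_iso φ.symm⟩)

theorem exists_equiv_card_lt_coloringNumber {V : Type*} [Fintype V] (G : SimpleGraph V) :
    ∃ e : V ≃ Fin (Fintype.card V),
      ∀ i : V, Nat.card {j : V // G.Adj i j ∧ e j < e i} < coloringNumber G := by
  refine Nat.sInf_mem (s := {d | ∃ e : V ≃ Fin (Fintype.card V),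
    ∀ i : V, Nat.card {j : V // G.Adj i j ∧ e j < e i} < d})
    ⟨Fintype.card V + 1, Fintype.equivFin V, fun i => Nat.lt_succ_of_le ?_⟩
  exact (Finite.card_subtype_le _).trans_eq Nat.card_eq_fintype_card

/-- Color the copies of `G` one at a time, in an order of `W` in which every vertex has at most
`b` earlier neighbors. -/
theorem Choosable.boxProd {V W : Type*} [Fintype W] {G : SimpleGraph V} {H : SimpleGraph W}
    {a b : ℕ} (hG : Choosable G a) (e : W ≃ Fin (Fintype.card W))
    (he : ∀ i : W, Nat.card {j : W // H.Adj i j ∧ e j < e i} ≤ b) :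
    Choosable (G □ H) (a + b) := by
  classical
  intro L hL
  have key : ∀ n ≤ Fintype.card W, ∃ f : V × W → ℕ,
      (∀ x, (e x.2 : ℕ) < n → f x ∈ L x) ∧
      ∀ x y, (e x.2 : ℕ) < n → (e y.2 : ℕ) < n → (G □ H).Adj x y → f x ≠ f y := by
    intro n
    induction n with
    | zero => exact fun _ => ⟨fun _ => 0, by simp, by simp⟩
    | succ n ih =>
      intro hn
      obtain ⟨f, hmem, hne⟩ := ih (by omega)
      obtain ⟨w, hw⟩ := e.surjective ⟨n, hn⟩
      have hwn : (e w : ℕ) = n := by rw [hw]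
      let B : Finset W := {j | H.Adj w j ∧ e j < e w}
      have hB : B.card ≤ b := by
        have := he w
        rwa [Nat.card_eq_fintype_card, Fintype.card_subtype] at this
      obtain ⟨g, hgmem, hgne⟩ := hG.exists_of_le_card
        (fun v => L (v, w) \ B.image fun j => f (v, j)) fun v => by
          have h₁ := Finset.le_card_sdiff (B.image fun j => f (v, j)) (L (v, w))
          have h₂ : (B.image fun j => f (v, j)).card ≤ B.card := Finset.card_image_le
          rw [hL] at h₁
          omega
      have hlt : ∀ j, (e j : ℕ) < n + 1 → j ≠ w → (e j : ℕ) < n := by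
        intro j hj hjw
        have : (e j : ℕ) ≠ e w := fun h => hjw (e.injective (Fin.ext h))
        omega
      have hback : ∀ v j, (e j : ℕ) < n → H.Adj w j → g v ≠ f (v, j) := by
        intro v j hj hadj heq
        refine (Finset.mem_sdiff.1 (hgmem v)).2 (Finset.mem_image.2 ⟨j, ?_, heq.symm⟩)
        simpa [B, hadj, Fin.lt_def, hwn] using hj
      refine ⟨fun x => if x.2 = w then g x.1 else f x, ?_, ?_⟩
      · rintro ⟨v, j⟩ hj
        by_cases hjw : j = w
        · subst hjw
          simpa using (Finset.mem_sdiff.1 (hgmem v)).1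
        · simpa [hjw] using hmem (v, j) (hlt j hj hjw)
      · rintro ⟨v, i⟩ ⟨u, j⟩ hi hj hadj
        by_cases hiw : i = w <;> by_cases hjw : j = w
        · subst hiw hjw
          simpa using hgne (by simpa using hadj)
        · subst hiw
          have hj' := hlt j hj hjw
          obtain ⟨hH, rfl⟩ : H.Adj i j ∧ v = u := by
            simpa [boxProd_adj, Ne.symm hjw] using hadj
          simpa [hjw] using hback v j hj' hH
        · subst hjw
          have hi' := hlt i hi hiw
          obtain ⟨hH, rfl⟩ : H.Adj i j ∧ v = u := by
            simpa [boxProd_adj, hiw] using hadj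
          simpa [hiw] using (hback v i hi' hH.symm).symm
        · simpa [hiw, hjw] using hne _ _ (hlt i hi hiw) (hlt j hj hjw) hadj
  obtain ⟨f, hmem, hne⟩ := key _ le_rfl
  exact ⟨f, fun x => hmem x (e x.2).isLt, fun x y => hne x y (e x.2).isLt (e y.2).isLt⟩

theorem listChromaticNumber_boxProd_le {V W : Type*} [Fintype V] [Fintype W]
    (G : SimpleGraph V) (H : SimpleGraph W) :
    listChromaticNumber (G □ H) ≤ listChromaticNumber G + coloringNumber H - 1 := by
  obtain ⟨e, he⟩ := exists_equiv_card_lt_coloringNumber H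
  rcases isEmpty_or_nonempty W with hW | ⟨⟨w⟩⟩
  · have h : Choosable (G □ H) 0 := fun _ _ => ⟨fun _ => 0, isEmptyElim, isEmptyElim⟩
    exact (listChromaticNumber_le h).trans (Nat.zero_le _)
  · have hpos := he w
    rw [Nat.add_sub_assoc (by omega)]
    exact listChromaticNumber_le
      ((choosable_listChromaticNumber G).boxProd e fun i => Nat.le_sub_one_of_lt (he i))

theorem listChromatic_boxProd_le_min {V W : Type*} [Fintype V] [Fintype W]
    (G : SimpleGraph V) (H : SimpleGraph W) :
    listChromaticNumber (G □ H) ≤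
      min (listChromaticNumber G + coloringNumber H)
        (coloringNumber G + listChromaticNumber H) - 1 := by
  have h := listChromaticNumber_boxProd_le H G
  rw [listChromaticNumber_eq_of_iso (boxProdComm H G)] at h
  have h' := listChromaticNumber_boxProd_le G H
  omega
end

section
/- For n, a ∈ ℕ with n ≥ a + 1, the least b such that χ_ℓ(K_n □ K_{a,b}) = n + a equals ((n+a−1)! / (a−1)!)^a. In particular, for any l ∈ ℕ, the least b with χ_ℓ(C_{2l+1} □ K_{2,b}) = 5 equals 9(9^l − 1)^2. -/
open SimpleGraph

namespace ListColoring

section General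

variable {V : Type*} {M : SimpleGraph V}

/-- A `k`-choosable graph can be colored from lists of size at least `k`. -/
lemma exists_coloring_of_le_card {k : ℕ} (h : Choosable M k) {L : V → Finset ℕ}
    (hL : ∀ v, k ≤ (L v).card) : ∃ f, IsProperListColoring M L f := by
  choose S hS hc using fun v => Finset.exists_subset_card_eq (hL v)
  obtain ⟨f, hf, hp⟩ := h S hc
  exact ⟨f, fun v => hS v (hf v), hp⟩

lemma Choosable.mono {k k' : ℕ} (hk : k ≤ k') (h : Choosable M k) : Choosable M k' :=
  fun _ hL => exists_coloring_of_le_card h fun v => by rw [hL v]; exact hk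

lemma listChromaticNumber_eq {k : ℕ} (h : Choosable M (k + 1)) (h' : ¬ Choosable M k) :
    listChromaticNumber M = k + 1 := by
  refine le_antisymm (Nat.sInf_le h) (le_csInf ⟨_, h⟩ fun j hj => ?_)
  by_contra hlt
  exact h' (Choosable.mono (by omega) hj)

variable {a b : ℕ}

/-- The colors left on the `j`-th copy of `M` once the first `a` copies are colored by `g`. -/
def residual (L : V × (Fin a ⊕ Fin b) → Finset ℕ) (j : Fin b) (g : Fin a → V → ℕ) (v : V) :
    Finset ℕ :=
  L (v, Sum.inr j) \ Finset.univ.image fun i => g i v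

lemma exists_boxProd_coloring {L : V × (Fin a ⊕ Fin b) → Finset ℕ} {g : Fin a → V → ℕ}
    (hg : ∀ i, IsProperListColoring M (fun v => L (v, Sum.inl i)) (g i))
    (h : ∀ j, ∃ f, IsProperListColoring M (residual L j g) f) :
    ∃ f, IsProperListColoring (M □ completeBipartiteGraph (Fin a) (Fin b)) L f := by
  choose f hf using h
  have hne : ∀ i j v, f j v ≠ g i v := fun i j v he => by
    have := (hf j).1 v
    simp only [residual, Finset.mem_sdiff, Finset.mem_image, not_exists] at this
    exact this.2 i ⟨Finset.mem_univ _, he.symm⟩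
  refine ⟨fun x => Sum.elim (fun i => g i x.1) (fun j => f j x.1) x.2, ?_, ?_⟩
  · rintro ⟨v, i | j⟩
    · exact (hg i).1 v
    · exact (Finset.mem_sdiff.1 ((hf j).1 v)).1
  · rintro ⟨v, x⟩ ⟨w, y⟩ hadj
    rw [boxProd_adj] at hadj
    rcases hadj with ⟨hvw, rfl⟩ | ⟨hxy, rfl⟩
    · rcases x with i | j
      · exact (hg i).2 hvw
      · exact (hf j).2 hvw
    · rcases x with i | j <;> rcases y with i' | j' <;>
        simp only [completeBipartiteGraph_adj] at hxy <;> simp at hxy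
      · exact (hne _ _ _).symm
      · exact hne _ _ _

lemma card_residual_add (L : V × (Fin a ⊕ Fin b) → Finset ℕ) (j : Fin b) (g : Fin a → V → ℕ)
    (v : V) : (L (v, Sum.inr j)).card ≤ (residual L j g v).card + a := by
  have h1 := Finset.le_card_sdiff (Finset.univ.image fun i => g i v) (L (v, Sum.inr j))
  have h2 : (Finset.univ.image fun i => g i v).card ≤ a :=
    Finset.card_image_le.trans (by simp)
  unfold residual
  omega

lemma choosable_boxProd_add {k : ℕ} (h : Choosable M k) :
    Choosable (M □ completeBipartiteGraph (Fin a) (Fin b)) (k + a) := by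
  intro L hL
  have h1 : ∀ i : Fin a, ∃ g, IsProperListColoring M (fun v => L (v, Sum.inl i)) g :=
    fun i => exists_coloring_of_le_card h fun v => by rw [hL]; omega
  choose g hg using h1
  refine exists_boxProd_coloring hg fun j => exists_coloring_of_le_card h fun v => ?_
  have := card_residual_add L j g v
  rw [hL] at this
  omega

/-- If the lists of two distinct copies of `M` meet at a vertex, then giving both copies a common
color there saves a color on all the other copies. -/
lemma exists_boxProd_coloring_of_common [DecidableEq V] {k : ℕ} (hk : 1 ≤ k) (hM : Choosable M k)
    (hcrit : ∀ L : V → Finset ℕ, (∀ v, k - 1 ≤ (L v).card) →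
      (¬ ∃ f, IsProperListColoring M L f) → ∃ B : Finset ℕ, B.card = k - 1 ∧ ∀ v, L v = B)
    {L : V × (Fin a ⊕ Fin b) → Finset ℕ} (hL : ∀ x, (L x).card = k + a - 1)
    {v : V} {i i' : Fin a} (hi : i ≠ i') {c : ℕ} (hc : c ∈ L (v, Sum.inl i))
    (hc' : c ∈ L (v, Sum.inl i')) :
    ∃ f, IsProperListColoring (M □ completeBipartiteGraph (Fin a) (Fin b)) L f := by
  have ha : 2 ≤ a := by have := i.2; have := i'.2; have := Fin.val_ne_of_ne hi; omega
  have h1 : ∀ i : Fin a, ∃ g, IsProperListColoring M (fun v => L (v, Sum.inl i)) g ∧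
      (c ∈ L (v, Sum.inl i) → g v = c) := by
    intro i
    obtain ⟨g, hg, hp⟩ := exists_coloring_of_le_card (L := fun v => (L (v, Sum.inl i)).erase c) hM
      fun v => by
        have := Finset.pred_card_le_card_erase (s := L (v, Sum.inl i)) (a := c)
        rw [hL] at this
        omega
    have hgc : ∀ w, g w ≠ c := fun w => (Finset.mem_erase.1 (hg w)).1
    have hgm : ∀ w, g w ∈ L (w, Sum.inl i) := fun w => (Finset.mem_erase.1 (hg w)).2
    by_cases hci : c ∈ L (v, Sum.inl i)
    · refine ⟨Function.update g v c, ⟨fun w => ?_, fun w x hwx => ?_⟩, fun _ => by simp⟩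
      · by_cases hw : w = v
        · subst hw; simpa using hci
        · simpa [hw] using hgm w
      · have hne := hwx.ne
        by_cases hw : w = v
        · subst hw
          simpa [hne.symm] using (hgc x).symm
        · by_cases hx : x = v
          · subst hx
            simpa [hw] using hgc w
          · simpa [hw, hx] using hp hwx
    · exact ⟨g, ⟨hgm, hp⟩, fun h => absurd h hci⟩
  choose g hg hgc using h1
  refine exists_boxProd_coloring hg fun j => ?_
  by_contra hbad
  obtain ⟨B, hB, hRB⟩ := hcrit _ (fun w => by
    have := card_residual_add L j g w
    rw [hL] at this
    omega) hbad
  have himg : (Finset.univ.image fun i => g i v).card < a := by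
    refine lt_of_le_of_ne (Finset.card_image_le.trans (by simp)) fun hcard => hi ?_
    have hinj := Finset.card_image_iff.1 (hcard.trans (Finset.card_fin a).symm)
    exact hinj (by simp) (by simp) ((hgc i hc).trans (hgc i' hc').symm)
  have h2 := Finset.le_card_sdiff (Finset.univ.image fun i => g i v) (L (v, Sum.inr j))
  have h3 := congrArg Finset.card (hRB v)
  unfold residual at h3
  rw [hL] at h2
  omega

/-- When the lists on the first `a` copies are disjoint at each vertex, each of the other copies
obstructs at most one coloring of the first `a` copies. -/
lemma eq_of_residual_eq {k : ℕ} (hka : a + 1 ≤ k) (hncol : ¬ M.Colorable (k - 1))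
    {L : V × (Fin a ⊕ Fin b) → Finset ℕ} (hL : ∀ x, (L x).card = k + a - 1)
    (hdisj : ∀ v c i i', c ∈ L (v, Sum.inl i) → c ∈ L (v, Sum.inl i') → i = i')
    {g g' : Fin a → V → ℕ} (hg : ∀ i, IsProperListColoring M (fun v => L (v, Sum.inl i)) (g i))
    (hg' : ∀ i, IsProperListColoring M (fun v => L (v, Sum.inl i)) (g' i)) {j : Fin b}
    {B B' : Finset ℕ} (hB : B.card = k - 1) (hB' : B'.card = k - 1)
    (hR : ∀ v, residual L j g v = B) (hR' : ∀ v, residual L j g' v = B') : g = g' := by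
  have hBB : B = B' := by
    by_contra hne
    have hsub : ¬ B ⊆ B' := fun h => hne (Finset.eq_of_subset_of_card_le h (by omega))
    obtain ⟨c, hcB, hcB'⟩ := Finset.not_subset.1 hsub
    have h1 : ∀ v, ∃ i, g' i v = c := by
      intro v
      have h2 : c ∈ L (v, Sum.inr j) := by
        rw [← hR v] at hcB
        exact (Finset.mem_sdiff.1 hcB).1
      rw [← hR' v, residual, Finset.mem_sdiff] at hcB'
      push Not at hcB'
      simpa using hcB' h2
    choose i hi using h1
    refine hncol (Colorable.mono (n := a) (by omega) ⟨Coloring.mk i fun {v w} hvw he => ?_⟩)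
    refine (hg' (i v)).2 hvw ?_
    rw [hi v, he, hi w]
  funext i v
  have h1 : (Finset.univ.image fun i => g i v) ⊆ L (v, Sum.inr j) := by
    have h2 := congrArg Finset.card (hR v)
    have h3 := Finset.card_sdiff_add_card_inter (L (v, Sum.inr j)) (Finset.univ.image fun i => g i v)
    have h4 : (Finset.univ.image fun i => g i v).card ≤ a :=
      Finset.card_image_le.trans (by simp)
    unfold residual at h2
    rw [hL] at h3
    exact Finset.inter_eq_right.1 (Finset.eq_of_subset_of_card_le Finset.inter_subset_right
      (by omega))
  have h2 : g i v ∈ L (v, Sum.inr j) := h1 (by simp)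
  have h3 : g i v ∉ B := by
    rw [← hR v]
    simp [residual]
  rw [hBB, ← hR' v, residual, Finset.mem_sdiff] at h3
  push Not at h3
  obtain ⟨i', hi'⟩ : ∃ i', g' i' v = g i v := by simpa using h3 h2
  obtain rfl := hdisj v (g i v) i i' ((hg i).1 v) (by rw [← hi']; exact (hg' i').1 v)
  exact hi'.symm

variable [Fintype V] [DecidableEq V]

open Classical in
/-- The finite set of proper colorings of `M` from `L`. -/
noncomputable def colorings (M : SimpleGraph V) (L : V → Finset ℕ) : Finset (V → ℕ) :=
  (Fintype.piFinset L).filter fun f => ∀ ⦃v w⦄, M.Adj v w → f v ≠ f w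

lemma mem_colorings {L : V → Finset ℕ} {f : V → ℕ} :
    f ∈ colorings M L ↔ IsProperListColoring M L f := by
  simp [colorings, IsProperListColoring]

lemma choosable_boxProd_of_lt {k P : ℕ} (hka : a + 1 ≤ k) (hM : Choosable M k)
    (hcrit : ∀ L : V → Finset ℕ, (∀ v, k - 1 ≤ (L v).card) →
      (¬ ∃ f, IsProperListColoring M L f) → ∃ B : Finset ℕ, B.card = k - 1 ∧ ∀ v, L v = B)
    (hncol : ¬ M.Colorable (k - 1))
    (hP : ∀ L : V → Finset ℕ, (∀ v, (L v).card = k + a - 1) → P ≤ (colorings M L).card)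
    (hb : b < P ^ a) :
    Choosable (M □ completeBipartiteGraph (Fin a) (Fin b)) (k + a - 1) := by
  intro L hL
  by_cases hdisj : ∀ v c i i', c ∈ L (v, Sum.inl i) → c ∈ L (v, Sum.inl i') → i = i'
  swap
  · push Not at hdisj
    obtain ⟨v, c, i, i', hc, hc', hi⟩ := hdisj
    exact exists_boxProd_coloring_of_common (by omega) hM hcrit hL hi hc hc'
  by_contra hno
  let F := Fintype.piFinset fun i : Fin a => colorings M fun v => L (v, Sum.inl i)
  have hFmem : ∀ g ∈ F, ∀ i, IsProperListColoring M (fun v => L (v, Sum.inl i)) (g i) :=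
    fun g hg i => mem_colorings.1 (Fintype.mem_piFinset.1 hg i)
  have hF : P ^ a ≤ F.card := by
    rw [Fintype.card_piFinset]
    simpa using Finset.pow_card_le_prod Finset.univ
      (fun i : Fin a => (colorings M fun v => L (v, Sum.inl i)).card) P
      fun i _ => hP _ fun v => hL _
  have hbad : ∀ g : F, ∃ j : Fin b, ∃ B : Finset ℕ, B.card = k - 1 ∧
      ∀ v, residual L j g.1 v = B := by
    intro g
    by_contra hcon
    push Not at hcon
    refine hno (exists_boxProd_coloring (hFmem _ g.2) fun j => ?_)
    by_contra hj
    obtain ⟨B, hB, hR⟩ := hcrit (residual L j g.1) (fun w => by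
      have := card_residual_add L j g.1 w
      rw [hL] at this
      omega) hj
    obtain ⟨v, hv⟩ := hcon j B hB
    exact hv (hR v)
  choose j B hB hR using hbad
  have hinj : Function.Injective j := fun g g' hgg => Subtype.ext <|
    eq_of_residual_eq hka hncol hL hdisj (hFmem _ g.2) (hFmem _ g'.2) (hB g) (hB g') (hR g)
      (by rw [hgg]; exact hR g')
  have := Fintype.card_le_of_injective j hinj
  simp only [Fintype.card_coe, Fintype.card_fin] at this
  omega

lemma not_choosable_boxProd {k P : ℕ} (hk : 1 ≤ k) (hncol : ¬ M.Colorable (k - 1))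
    (hP : ∀ A : Finset ℕ, A.card = k + a - 1 → (colorings M fun _ => A).card ≤ P) :
    ¬ Choosable (M □ completeBipartiteGraph (Fin a) (Fin (P ^ a))) (k + a - 1) := by
  set m := k + a - 1 with hm
  let A : Fin a → Finset ℕ := fun i => Finset.Ico ((i + 1) * m) ((i + 1) * m + m)
  have hA : ∀ i, (A i).card = m := fun i => by simp [A]
  have hAle : ∀ i c, c ∈ A i → m ≤ c := fun i c hc => by
    have := (Finset.mem_Ico.1 hc).1
    nlinarith [Nat.zero_le (i.1 * m)]
  have hAdisj : ∀ i i' c, c ∈ A i → c ∈ A i' → i = i' := fun i i' c hc hc' => by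
    simp only [A, Finset.mem_Ico] at hc hc'
    by_contra hne
    rcases lt_or_gt_of_ne hne with h | h
    · have : (i.1 + 1 + 1) * m ≤ (i'.1 + 1) * m := Nat.mul_le_mul_right _ (by omega)
      rw [add_mul (i.1 + 1)] at this
      omega
    · have : (i'.1 + 1 + 1) * m ≤ (i.1 + 1) * m := Nat.mul_le_mul_right _ (by omega)
      rw [add_mul (i'.1 + 1)] at this
      omega
  let F := Fintype.piFinset fun i : Fin a => colorings M fun _ => A i
  have hF : F.card ≤ P ^ a := by
    rw [Fintype.card_piFinset]
    simpa using Finset.prod_le_pow_card Finset.univ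
      (fun i : Fin a => (colorings M fun _ => A i).card) P fun i _ => hP _ (hA i)
  obtain ⟨e⟩ : Nonempty (F ↪ Fin (P ^ a)) :=
    Function.Embedding.nonempty_of_card_le (by simpa using hF)
  have hlist : ∀ j : Fin (P ^ a), ∃ l : V → Finset ℕ, (∀ v, (l v).card = m) ∧
      ∀ g : F, e g = j →
        ∀ v, l v = Finset.univ.image (fun i => g.1 i v) ∪ Finset.range (k - 1) := by
    intro j
    by_cases h : ∃ g, e g = j
    · obtain ⟨g, rfl⟩ := h
      refine ⟨fun v => Finset.univ.image (fun i => g.1 i v) ∪ Finset.range (k - 1), fun v => ?_,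
        fun g' hg' v => by rw [e.injective hg']⟩
      have hmem : ∀ i, g.1 i v ∈ A i := fun i =>
        (mem_colorings.1 (Fintype.mem_piFinset.1 g.2 i)).1 v
      rw [Finset.card_union_of_disjoint, Finset.card_image_of_injective, Finset.card_range,
        Finset.card_univ, Fintype.card_fin]
      · omega
      · intro i i' h
        dsimp only at h
        exact hAdisj i i' _ (hmem i) (by rw [h]; exact hmem i')
      · rw [Finset.disjoint_left]
        intro c hc hc'
        obtain ⟨i, -, rfl⟩ := Finset.mem_image.1 hc
        have := hAle i _ (hmem i)
        have := Finset.mem_range.1 hc'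
        omega
    · exact ⟨fun _ => Finset.range m, fun _ => by simp, fun g hg => absurd ⟨g, hg⟩ h⟩
  choose l hl hle using hlist
  intro hch
  obtain ⟨f, hf, hp⟩ := hch (fun x => Sum.elim A (fun j => l j x.1) x.2) (by
    rintro ⟨v, i | j⟩
    · exact hA i
    · exact hl j v)
  have hgF : (fun i v => f (v, Sum.inl i)) ∈ F := by
    rw [Fintype.mem_piFinset]
    refine fun i => mem_colorings.2 ⟨fun v => hf (v, Sum.inl i), fun v w hvw => hp ?_⟩
    rw [boxProd_adj]
    exact Or.inl ⟨hvw, rfl⟩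
  set j := e ⟨_, hgF⟩ with hj
  have hmem : ∀ v, f (v, Sum.inr j) < k - 1 := by
    intro v
    have h1 : f (v, Sum.inr j) ∈ l j v := hf (v, Sum.inr j)
    rw [hle j ⟨_, hgF⟩ rfl v, Finset.mem_union] at h1
    rcases h1 with h1 | h1
    · obtain ⟨i, -, hi⟩ := Finset.mem_image.1 h1
      refine absurd hi (hp ?_)
      rw [boxProd_adj]
      exact Or.inr ⟨by simp [completeBipartiteGraph_adj], rfl⟩
    · exact Finset.mem_range.1 h1
  refine hncol ⟨Coloring.mk (fun v => ⟨_, hmem v⟩) fun {v w} hvw he => ?_⟩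
  refine hp (v := (v, Sum.inr j)) (w := (w, Sum.inr j)) ?_ (Fin.mk.inj_iff.1 he)
  rw [boxProd_adj]
  exact Or.inl ⟨hvw, rfl⟩

/-- The least `b` for which `M □ K_{a,b}` has list chromatic number `k + a`, for a graph `M`
satisfying the conclusions of strong chromatic-choosability. -/
theorem isLeast_listChromaticNumber_boxProd [Nonempty V] {k P : ℕ} (hka : a + 1 ≤ k)
    (hcrit : ∀ L : V → Finset ℕ, (∀ v, k - 1 ≤ (L v).card) →
      (¬ ∃ f, IsProperListColoring M L f) → ∃ B : Finset ℕ, B.card = k - 1 ∧ ∀ v, L v = B)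
    (hncol : ¬ M.Colorable (k - 1))
    (hP : ∀ L : V → Finset ℕ, (∀ v, (L v).card = k + a - 1) → P ≤ (colorings M L).card)
    (hP' : ∀ A : Finset ℕ, A.card = k + a - 1 → (colorings M fun _ => A).card ≤ P) :
    IsLeast {b : ℕ | listChromaticNumber (M □ completeBipartiteGraph (Fin a) (Fin b)) = k + a}
      (P ^ a) := by
  have hM : Choosable M k := by
    intro L hL
    by_contra hno
    obtain ⟨B, hB, hLB⟩ := hcrit L (fun v => by rw [hL]; omega) hno
    obtain ⟨v⟩ := ‹Nonempty V›
    have := hL v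
    rw [hLB v] at this
    omega
  have hs : k + a - 1 + 1 = k + a := by omega
  constructor
  · rw [Set.mem_ofPred_eq, ← hs]
    refine listChromaticNumber_eq ?_ (not_choosable_boxProd (by omega) hncol hP')
    rw [hs]
    exact choosable_boxProd_add hM
  · intro b hb
    by_contra hlt
    have hle : listChromaticNumber _ ≤ _ :=
      Nat.sInf_le (choosable_boxProd_of_lt hka hM hcrit hncol hP (not_le.1 hlt))
    rw [Set.mem_ofPred_eq] at hb
    rw [hb] at hle
    omega

end General

section Complete

lemma exists_coloring_top {n : ℕ} (L : Fin n → Finset ℕ) (hL : ∀ v, n - 1 ≤ (L v).card)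
    (hno : ¬ ∃ f, IsProperListColoring (⊤ : SimpleGraph (Fin n)) L f) :
    ∃ B : Finset ℕ, B.card = n - 1 ∧ ∀ v, L v = B := by
  have hall : ¬ ∀ s : Finset (Fin n), s.card ≤ (s.biUnion L).card := fun h => by
    obtain ⟨f, hf, hm⟩ := (Finset.all_card_le_biUnion_card_iff_exists_injective L).1 h
    exact hno ⟨f, hm, fun v w hvw => hf.ne hvw.ne⟩
  push Not at hall
  obtain ⟨s, hs⟩ := hall
  have hne : s.Nonempty := by
    rw [Finset.nonempty_iff_ne_empty]
    rintro rfl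
    simp at hs
  have hsub : ∀ v ∈ s, L v ⊆ s.biUnion L := fun v hv => Finset.subset_biUnion_of_mem L hv
  have hsn : s.card ≤ n := by simpa using Finset.card_le_univ s
  obtain ⟨v₀, hv₀⟩ := hne
  have h0 := (hL v₀).trans (Finset.card_le_card (hsub v₀ hv₀))
  have huniv : s = Finset.univ := Finset.eq_univ_of_card s (by simp; omega)
  refine ⟨s.biUnion L, by omega, fun v => ?_⟩
  exact Finset.eq_of_subset_of_card_le (hsub v (by simp [huniv])) (by have := hL v; omega)

lemma descFactorial_le_card_colorings_top (m n : ℕ) (L : Fin n → Finset ℕ)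
    (hL : ∀ v, (L v).card = m) :
    m.descFactorial n ≤ (colorings (⊤ : SimpleGraph (Fin n)) L).card := by
  induction n with
  | zero =>
    rw [Nat.descFactorial_zero, Nat.succ_le_iff, Finset.card_pos]
    exact ⟨Fin.elim0, mem_colorings.2 ⟨fun v => v.elim0, fun v => v.elim0⟩⟩
  | succ n ih =>
    have ih := ih (fun i => L i.castSucc) fun _ => hL _
    let T := (colorings (⊤ : SimpleGraph (Fin n)) fun i => L i.castSucc).sigma
      fun f => L (Fin.last n) \ Finset.univ.image f
    have hT : m.descFactorial (n + 1) ≤ T.card := by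
      rw [Finset.card_sigma, Nat.descFactorial_succ, mul_comm]
      refine (Nat.mul_le_mul_right _ ih).trans ?_
      rw [← smul_eq_mul, ← Finset.sum_const]
      refine Finset.sum_le_sum fun f _ => ?_
      have h1 := Finset.le_card_sdiff (Finset.univ.image f) (L (Fin.last n))
      have h2 : (Finset.univ.image f).card ≤ n := Finset.card_image_le.trans (by simp)
      rw [hL] at h1
      omega
    refine hT.trans (Finset.card_le_card_of_injOn
      (fun x => (Fin.snoc x.1 x.2 : Fin (n + 1) → ℕ)) ?_ ?_)
    · rintro ⟨f, c⟩ hfc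
      obtain ⟨hf, hc⟩ := Finset.mem_sigma.1 hfc
      obtain ⟨hf, hp⟩ := mem_colorings.1 hf
      simp only [Finset.mem_sdiff, Finset.mem_image, Finset.mem_univ, true_and, not_exists] at hc
      refine mem_colorings.2 ⟨fun v => ?_, fun v w hvw => ?_⟩
      · refine Fin.lastCases ?_ (fun i => ?_) v
        · simpa using hc.1
        · simpa using hf i
      · revert hvw
        refine Fin.lastCases ?_ (fun i => ?_) v <;> refine Fin.lastCases ?_ (fun i' => ?_) w
        · simp
        · intro _
          simpa using Ne.symm (hc.2 i')
        · intro _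
          simpa using hc.2 i
        · intro h
          have : i ≠ i' := fun he => h.ne (by rw [he])
          simpa using hp (v := i) (w := i') this
    · rintro ⟨f, c⟩ _ ⟨f', c'⟩ _ h
      obtain ⟨rfl, rfl⟩ := Fin.snoc_injective2 h
      rfl

lemma card_colorings_top_const_le (n : ℕ) (A : Finset ℕ) :
    (colorings (⊤ : SimpleGraph (Fin n)) fun _ => A).card ≤ A.card.descFactorial n := by
  have h : Fintype.card (Fin n ↪ A) = A.card.descFactorial n := by
    simp [Fintype.card_embedding_eq]
  rw [← h, ← Fintype.card_coe]
  refine Fintype.card_le_of_injective (fun f => (⟨fun i => ⟨f.1 i, (mem_colorings.1 f.2).1 i⟩,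
    fun i j hij => ?_⟩ : Fin n ↪ A)) fun f g hfg => ?_
  · by_contra hne
    exact (mem_colorings.1 f.2).2 (v := i) (w := j) hne (congrArg Subtype.val hij)
  · ext i
    exact congrArg Subtype.val (DFunLike.congr_fun hfg i)

lemma not_colorable_top {n : ℕ} (hn : 1 ≤ n) : ¬ (⊤ : SimpleGraph (Fin n)).Colorable (n - 1) := by
  rintro ⟨C⟩
  have h : Function.Injective C := fun v w hvw => by
    by_contra hne
    exact C.valid (v := v) (w := w) hne hvw
  have := Fintype.card_le_of_injective C h
  simp only [Fintype.card_fin] at this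
  omega

end Complete

section OddCycle

lemma forall_cycleGraph_adj_iff {n : ℕ} (hn : 1 ≤ n) (f : Fin (n + 1) → ℕ) :
    (∀ ⦃v w⦄, (cycleGraph (n + 1)).Adj v w → f v ≠ f w) ↔
      (∀ i : Fin n, f i.castSucc ≠ f i.succ) ∧ f (Fin.last n) ≠ f 0 := by
  obtain ⟨n, rfl⟩ : ∃ m, n = m + 1 := ⟨n - 1, by omega⟩
  have key : (∀ ⦃v w⦄, (cycleGraph (n + 1 + 1)).Adj v w → f v ≠ f w) ↔
      ∀ v, f v ≠ f (v + 1) := by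
    refine ⟨fun h v => h (cycleGraph_adj.2 (Or.inr (by simp))), fun h v w hvw => ?_⟩
    rcases cycleGraph_adj.1 hvw with h1 | h1
    · rw [sub_eq_iff_eq_add.1 h1, add_comm]
      exact (h w).symm
    · rw [sub_eq_iff_eq_add.1 h1, add_comm 1]
      exact h v
  rw [key]
  refine ⟨fun h => ⟨fun i => ?_, ?_⟩, fun h v => ?_⟩
  · have := h i.castSucc
    rwa [Fin.coeSucc_eq_succ] at this
  · have := h (Fin.last _)
    rwa [Fin.last_add_one] at this
  · refine Fin.lastCases ?_ (fun i => ?_) v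
    · rw [Fin.last_add_one]
      exact h.2
    · rw [Fin.coeSucc_eq_succ]
      exact h.1 i

/-- Proper colorings of the path `0, …, t` from the lists `L` with `0` colored `c`. -/
def pathColorings (L : ℕ → Finset ℕ) (c t : ℕ) : Finset (Fin (t + 1) → ℕ) :=
  (Fintype.piFinset fun i : Fin (t + 1) => L i).filter fun f =>
    f 0 = c ∧ ∀ i : Fin t, f i.castSucc ≠ f i.succ

/-- Proper colorings of the path `0, …, t` from `L` with `0` colored `c` and `t` colored `d`. -/
def pathColoringsTo (L : ℕ → Finset ℕ) (c t d : ℕ) : Finset (Fin (t + 1) → ℕ) :=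
  (pathColorings L c t).filter fun f => f (Fin.last t) = d

variable {L : ℕ → Finset ℕ} {c t d : ℕ}

lemma mem_pathColorings {f : Fin (t + 1) → ℕ} :
    f ∈ pathColorings L c t ↔
      (∀ i : Fin (t + 1), f i ∈ L i) ∧ f 0 = c ∧ ∀ i : Fin t, f i.castSucc ≠ f i.succ := by
  simp [pathColorings]

lemma sum_card_pathColoringsTo (L : ℕ → Finset ℕ) (c t : ℕ) :
    ∑ d ∈ L t, (pathColoringsTo L c t d).card = (pathColorings L c t).card := by
  refine (Finset.card_eq_sum_card_fiberwise (f := fun f : Fin (t + 1) → ℕ => f (Fin.last t))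
    fun f hf => ?_).symm
  simpa using (mem_pathColorings.1 hf).1 (Fin.last t)

lemma sum_card_pathColoringsTo_le (L : ℕ → Finset ℕ) (c t : ℕ) (K : Finset ℕ) :
    ∑ d ∈ K, (pathColoringsTo L c t d).card ≤ (pathColorings L c t).card := by
  have h := Finset.card_eq_sum_card_fiberwise (f := fun f : Fin (t + 1) → ℕ => f (Fin.last t))
    (s := (pathColorings L c t).filter fun f => f (Fin.last t) ∈ K) (t := K)
    fun f hf => (Finset.mem_filter.1 hf).2
  refine le_trans (le_of_eq ?_) (Finset.card_filter_le _ fun f => f (Fin.last t) ∈ K)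
  rw [h]
  refine Finset.sum_congr rfl fun d hd => congrArg _ ?_
  ext f
  simp only [pathColoringsTo, Finset.mem_filter]
  refine ⟨fun hf => ⟨⟨hf.1, hf.2 ▸ hd⟩, hf.2⟩, fun hf => ⟨hf.1.1, hf.2⟩⟩

lemma card_pathColoringsTo_succ_add (hd : d ∈ L (t + 1)) :
    (pathColoringsTo L c (t + 1) d).card + (pathColoringsTo L c t d).card =
      (pathColorings L c t).card := by
  rw [pathColoringsTo, pathColoringsTo, ← Finset.card_filter_add_card_filter_not
    (s := pathColorings L c t) (fun f => f (Fin.last t) = d), add_comm]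
  congr 1
  refine Finset.card_nbij' (fun f => Fin.init f) (fun f => Fin.snoc f d) ?_ ?_ ?_ ?_
  · intro f hf
    obtain ⟨hf, hfd⟩ := Finset.mem_filter.1 hf
    obtain ⟨hm, h0, hp⟩ := mem_pathColorings.1 hf
    refine Finset.mem_filter.2 ⟨mem_pathColorings.2 ⟨fun i => ?_, ?_, fun i => ?_⟩, ?_⟩
    · exact hm i.castSucc
    · exact h0
    · exact hp i.castSucc
    · rw [← hfd]
      exact hp (Fin.last t)
  · intro f hf
    obtain ⟨hf, hfd⟩ := Finset.mem_filter.1 hf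
    obtain ⟨hm, h0, hp⟩ := mem_pathColorings.1 hf
    refine Finset.mem_filter.2 ⟨mem_pathColorings.2 ⟨fun i => ?_, ?_, fun i => ?_⟩, by simp⟩
    · refine Fin.lastCases ?_ (fun i => ?_) i
      · simpa using hd
      · simpa using hm i
    · dsimp only
      rw [← Fin.castSucc_zero, Fin.snoc_castSucc]
      exact h0
    · refine Fin.lastCases ?_ (fun i => ?_) i
      · simpa using hfd
      · dsimp only
        rw [← Fin.castSucc_succ, Fin.snoc_castSucc, Fin.snoc_castSucc]
        exact hp i
  · intro f hf
    rw [← (Finset.mem_filter.1 hf).2]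
    exact Fin.snoc_init_self f
  · intro f _
    exact Fin.init_snoc _ _

lemma card_pathColorings_succ_add (L : ℕ → Finset ℕ) (c t : ℕ) :
    (pathColorings L c (t + 1)).card + ∑ d ∈ L (t + 1), (pathColoringsTo L c t d).card =
      (L (t + 1)).card * (pathColorings L c t).card := by
  rw [← sum_card_pathColoringsTo, ← Finset.sum_add_distrib, ← smul_eq_mul, ← Finset.sum_const]
  exact Finset.sum_congr rfl fun d hd => card_pathColoringsTo_succ_add hd

lemma pathColorings_zero (hc : c ∈ L 0) : pathColorings L c 0 = {fun _ => c} := by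
  ext f
  rw [mem_pathColorings, Finset.mem_singleton]
  refine ⟨fun h => ?_, ?_⟩
  · funext i
    rw [Fin.fin_one_eq_zero i, h.2.1]
  · rintro rfl
    exact ⟨fun i => by simpa using hc, rfl, fun i => i.elim0⟩

lemma three_pow_le_card_pathColorings (hL : ∀ i, (L i).card = 4) (hc : c ∈ L 0) (t : ℕ) :
    3 ^ t ≤ (pathColorings L c t).card := by
  induction t with
  | zero => simp [pathColorings_zero hc]
  | succ t ih =>
    have h1 := card_pathColorings_succ_add L c t
    have h2 := sum_card_pathColoringsTo_le L c t (L (t + 1))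
    rw [hL] at h1
    rw [pow_succ]
    omega

/-- For a path on an odd number of vertices with lists of size four, few colorings end in a
prescribed color. -/
lemma card_pathColoringsTo_even_le (hL : ∀ i, (L i).card = 4) (hc : c ∈ L 0) (s d : ℕ) :
    3 * (9 ^ s - 1) + 4 * (pathColoringsTo L c (2 * s) d).card ≤
      4 * (pathColorings L c (2 * s)).card := by
  induction s generalizing d with
  | zero =>
    have := Finset.card_filter_le (pathColorings L c 0) fun f => f (Fin.last 0) = d
    simpa [pathColoringsTo] using this
  | succ s ih =>
    set t := 2 * s with ht
    rw [show 2 * (s + 1) = t + 1 + 1 by omega]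
    have hS := three_pow_le_card_pathColorings hL hc (t + 1)
    obtain ⟨K, hK, hK3⟩ : ∃ K ⊆ (L (t + 1 + 1)).erase d, K.card = 3 :=
      Finset.exists_subset_card_eq (by
        have := Finset.pred_card_le_card_erase (s := L (t + 1 + 1)) (a := d)
        rw [hL] at this
        omega)
    have hKd : d ∉ K := fun h => (Finset.mem_erase.1 (hK h)).1 rfl
    obtain ⟨e, he, heK⟩ : ∃ e ∈ L (t + 1), e ∉ K :=
      Finset.exists_mem_notMem_of_card_lt_card (by rw [hK3, hL]; norm_num)
    have h1 : (pathColoringsTo L c (t + 1 + 1) d).card +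
        ∑ x ∈ K, (pathColoringsTo L c (t + 1 + 1) x).card ≤
          (pathColorings L c (t + 1 + 1)).card := by
      rw [← Finset.sum_insert (f := fun x => (pathColoringsTo L c (t + 1 + 1) x).card) hKd]
      exact sum_card_pathColoringsTo_le _ _ _ _
    have h2 : ∑ x ∈ K, (pathColoringsTo L c (t + 1 + 1) x).card +
        ∑ x ∈ K, (pathColoringsTo L c (t + 1) x).card =
          3 * (pathColorings L c (t + 1)).card := by
      rw [← Finset.sum_add_distrib, ← hK3, ← smul_eq_mul, ← Finset.sum_const]
      exact Finset.sum_congr rfl fun x hx =>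
        card_pathColoringsTo_succ_add (Finset.mem_of_mem_erase (hK hx))
    have h3 : (pathColoringsTo L c (t + 1) e).card +
        ∑ x ∈ K, (pathColoringsTo L c (t + 1) x).card ≤ (pathColorings L c (t + 1)).card := by
      rw [← Finset.sum_insert (f := fun x => (pathColoringsTo L c (t + 1) x).card) heK]
      exact sum_card_pathColoringsTo_le _ _ _ _
    have h4 := card_pathColoringsTo_succ_add (c := c) he
    have h5 := ih e
    have h6 : 3 ^ (t + 1) = 3 * 9 ^ s := by rw [ht, pow_succ, pow_mul]; norm_num [mul_comm]
    have h7 : 1 ≤ 9 ^ s := Nat.one_le_pow _ _ (by norm_num)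
    rw [pow_succ]
    omega

lemma card_pathColorings_const {A : Finset ℕ} (hA : A.card = 4) (hc : c ∈ A) (t : ℕ) :
    (pathColorings (fun _ => A) c t).card = 3 ^ t := by
  induction t with
  | zero => rw [pathColorings_zero (L := fun _ => A) hc, Finset.card_singleton, pow_zero]
  | succ t ih =>
    have h1 := card_pathColorings_succ_add (fun _ => A) c t
    have h2 := sum_card_pathColoringsTo (fun _ => A) c t
    rw [hA, h2, ih] at h1
    rw [pow_succ]
    omega

lemma card_pathColoringsTo_const {A : Finset ℕ} (hA : A.card = 4) (hc : c ∈ A) (s : ℕ) :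
    3 * (9 ^ s - 1) + 4 * (pathColoringsTo (fun _ => A) c (2 * s) c).card = 4 * 9 ^ s := by
  induction s with
  | zero =>
    rw [pathColoringsTo, Nat.mul_zero, pathColorings_zero (L := fun _ => A) hc]
    simp [Finset.filter_singleton]
  | succ s ih =>
    have h1 := card_pathColoringsTo_succ_add (L := fun _ => A) (c := c) (t := 2 * s) (d := c) hc
    have h2 := card_pathColoringsTo_succ_add (L := fun _ => A) (c := c) (t := 2 * s + 1) (d := c) hc
    rw [card_pathColorings_const hA hc] at h1 h2
    have h6 : 3 ^ (2 * s) = 9 ^ s := by rw [pow_mul]; norm_num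
    rw [pow_succ, h6] at h2
    rw [h6] at h1
    have h7 : 1 ≤ 9 ^ s := Nat.one_le_pow _ _ (by norm_num)
    rw [show 2 * (s + 1) = 2 * s + 1 + 1 by omega, pow_succ]
    omega

lemma card_colorings_cycleGraph {n : ℕ} (hn : 1 ≤ n) (L : ℕ → Finset ℕ) :
    (colorings (cycleGraph (n + 1)) fun i => L i).card +
        ∑ c ∈ L 0, (pathColoringsTo L c n c).card =
      ∑ c ∈ L 0, (pathColorings L c n).card := by
  have hmem : ∀ f, f ∈ colorings (cycleGraph (n + 1)) (fun i => L i) ↔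
      (∀ i : Fin (n + 1), f i ∈ L i) ∧
        (∀ i : Fin n, f i.castSucc ≠ f i.succ) ∧ f (Fin.last n) ≠ f 0 := fun f => by
    rw [mem_colorings, IsProperListColoring, forall_cycleGraph_adj_iff hn]
  rw [Finset.card_eq_sum_card_fiberwise (f := fun f => f 0) (t := L 0) fun f hf => by
    simpa using ((hmem f).1 hf).1 0, ← Finset.sum_add_distrib]
  refine Finset.sum_congr rfl fun c _ => ?_
  rw [pathColoringsTo, ← Finset.card_filter_add_card_filter_not
    (s := pathColorings L c n) (fun f => f (Fin.last n) = c), add_comm]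
  congr 2
  ext f
  rw [Finset.mem_filter, Finset.mem_filter, hmem, mem_pathColorings]
  constructor
  · rintro ⟨⟨h1, h2, h3⟩, rfl⟩
    exact ⟨⟨h1, rfl, h2⟩, h3⟩
  · rintro ⟨⟨h1, rfl, h2⟩, h3⟩
    exact ⟨⟨h1, h2, h3⟩, rfl⟩

lemma le_card_colorings_oddCycle {l : ℕ} (hl : 1 ≤ l) (L : Fin (2 * l + 1) → Finset ℕ)
    (hL : ∀ v, (L v).card = 4) :
    3 * (9 ^ l - 1) ≤ (colorings (cycleGraph (2 * l + 1)) L).card := by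
  let L' : ℕ → Finset ℕ := fun i => L (Fin.ofNat _ i)
  have hL' : ∀ i, (L' i).card = 4 := fun i => hL _
  have hLL : (fun i : Fin (2 * l + 1) => L' i) = L := by
    funext i
    simp [L']
  have h := card_colorings_cycleGraph (n := 2 * l) (by omega) L'
  rw [hLL] at h
  have h1 : ∑ c ∈ L' 0, (3 * (9 ^ l - 1) + 4 * (pathColoringsTo L' c (2 * l) c).card) ≤
      ∑ c ∈ L' 0, 4 * (pathColorings L' c (2 * l)).card :=
    Finset.sum_le_sum fun c hc => card_pathColoringsTo_even_le hL' hc l c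
  rw [Finset.sum_add_distrib, Finset.sum_const, hL', ← Finset.mul_sum, ← Finset.mul_sum,
    smul_eq_mul] at h1
  omega

lemma card_colorings_oddCycle_const {l : ℕ} (hl : 1 ≤ l) {A : Finset ℕ} (hA : A.card = 4) :
    (colorings (cycleGraph (2 * l + 1)) fun _ => A).card = 3 * (9 ^ l - 1) := by
  have h := card_colorings_cycleGraph (n := 2 * l) (by omega) fun _ => A
  have h1 : ∑ c ∈ A, (3 * (9 ^ l - 1) + 4 * (pathColoringsTo (fun _ => A) c (2 * l) c).card) =
      ∑ c ∈ A, 4 * (pathColorings (fun _ => A) c (2 * l)).card :=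
    Finset.sum_congr rfl fun c hc => by
      rw [card_pathColoringsTo_const hA hc, card_pathColorings_const hA hc, pow_mul]
      norm_num
  rw [Finset.sum_add_distrib, Finset.sum_const, hA, ← Finset.mul_sum, ← Finset.mul_sum,
    smul_eq_mul] at h1
  omega

/-- Greedy coloring of a sequence of lists of size at least two. -/
lemma exists_greedy_coloring (L : ℕ → Finset ℕ) (hL : ∀ i, 2 ≤ (L i).card) (hc : c ∈ L 0) :
    ∃ f : ℕ → ℕ, f 0 = c ∧ (∀ i, f i ∈ L i) ∧ ∀ i, f (i + 1) ≠ f i := by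
  have h : ∀ i x, ∃ y ∈ L i, y ≠ x := fun i x =>
    Finset.exists_mem_ne (lt_of_lt_of_le one_lt_two (hL i)) x
  choose g hg hne using h
  refine ⟨fun n => Nat.rec c (fun i x => g (i + 1) x) n, rfl, fun i => ?_, fun i => hne _ _⟩
  cases i with
  | zero => exact hc
  | succ i => exact hg _ _

lemma exists_coloring_cycleGraph {n : ℕ} (hn : 1 ≤ n) (L : Fin (n + 1) → Finset ℕ)
    (hL : ∀ v, 2 ≤ (L v).card) {v : Fin (n + 1)} (hv : ¬ L (v + 1) ⊆ L v) :
    ∃ f, IsProperListColoring (cycleGraph (n + 1)) L f := by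
  obtain ⟨c, hc, hc'⟩ := Finset.not_subset.1 hv
  obtain ⟨f, hf0, hf, hp⟩ := exists_greedy_coloring
    (fun i => L (v + 1 + Fin.ofNat _ i)) (fun _ => hL _) (c := c) (by simpa using hc)
  have hf' : ∀ i : Fin (n + 1), f i ∈ L (v + 1 + i) := fun i => by simpa using hf i
  have hcyc : ∀ ⦃u w⦄, (cycleGraph (n + 1)).Adj u w → f u.val ≠ f w.val := by
    refine (forall_cycleGraph_adj_iff hn fun i => f i.val).2 ⟨fun i => ?_, fun h => hc' ?_⟩
    · simpa using (hp i).symm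
    · have h1 := hf' (Fin.last n)
      rw [h, add_assoc, add_comm 1, Fin.last_add_one, add_zero] at h1
      rw [← hf0]
      simpa using h1
  refine ⟨fun w => f (w - (v + 1)).val, fun w => ?_, fun u w huw => hcyc ?_⟩
  · simpa using hf' (w - (v + 1))
  · obtain ⟨n, rfl⟩ : ∃ m, n = m + 1 := ⟨n - 1, by omega⟩
    rw [cycleGraph_adj] at huw ⊢
    simpa using huw

lemma chromaticNumber_oddCycle {l : ℕ} (hl : 1 ≤ l) :
    (cycleGraph (2 * l + 1)).chromaticNumber = 3 :=
  chromaticNumber_cycleGraph_of_odd _ (by omega) ⟨l, rfl⟩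

lemma exists_coloring_oddCycle {l : ℕ} (hl : 1 ≤ l) (L : Fin (2 * l + 1) → Finset ℕ)
    (hL : ∀ v, 2 ≤ (L v).card)
    (hno : ¬ ∃ f, IsProperListColoring (cycleGraph (2 * l + 1)) L f) :
    ∃ B : Finset ℕ, B.card = 2 ∧ ∀ v, L v = B := by
  have hstep : ∀ v, L (v + 1) ⊆ L v := fun v => by
    by_contra hv
    exact hno (exists_coloring_cycleGraph (by omega) L hL hv)
  have hall : ∀ (i : ℕ) v, L (v + Fin.ofNat _ i) ⊆ L v := by
    intro i
    induction i with
    | zero => simp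
    | succ i ih =>
      intro v
      have h : Fin.ofNat (2 * l + 1) (i + 1) = Fin.ofNat _ i + 1 :=
        Fin.ext (by simp [Fin.val_add, Nat.add_mod])
      rw [h, ← add_assoc]
      exact (hstep _).trans (ih v)
  have hsub : ∀ v w, L w ⊆ L v := fun v w => by
    have := hall (w - v).val v
    simpa using this
  have hconst : ∀ v, L v = L 0 := fun v => (hsub 0 v).antisymm (hsub v 0)
  refine ⟨L 0, le_antisymm (not_lt.1 fun h3 => hno ?_) (hL 0), hconst⟩
  obtain ⟨C⟩ := chromaticNumber_le_iff_colorable.1 (chromaticNumber_oddCycle hl).le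
  obtain ⟨e⟩ : Nonempty (Fin 3 ↪ L 0) :=
    Function.Embedding.nonempty_of_card_le (by simpa using Nat.succ_le_of_lt h3)
  refine ⟨fun v => e (C v), fun v => ?_, fun v w hvw h => ?_⟩
  · rw [hconst v]
    exact (e (C v)).2
  · exact C.valid hvw (e.injective (Subtype.ext h))

lemma not_colorable_oddCycle {l : ℕ} (hl : 1 ≤ l) :
    ¬ (cycleGraph (2 * l + 1)).Colorable 2 := fun h => by
  have := chromaticNumber_le_iff_colorable.2 h
  rw [chromaticNumber_oddCycle hl] at this
  exact absurd this (by norm_num)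

end OddCycle

end ListColoring

theorem f_a_complete_and_oddCycle :
    (∀ n a : ℕ, 1 ≤ a → a + 1 ≤ n →
      IsLeast {b : ℕ |
          listChromaticNumber ((⊤ : SimpleGraph (Fin n)) □
            completeBipartiteGraph (Fin a) (Fin b)) = n + a}
        ((Nat.factorial (n + a - 1) / Nat.factorial (a - 1)) ^ a)) ∧
    (∀ l : ℕ, 1 ≤ l →
      IsLeast {b : ℕ |
          listChromaticNumber (cycleGraph (2 * l + 1) □
            completeBipartiteGraph (Fin 2) (Fin b)) = 5}
        (9 * (9 ^ l - 1) ^ 2)) := by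
  refine ⟨fun n a ha hn => ?_, fun l hl => ?_⟩
  · have : Nonempty (Fin n) := ⟨⟨0, by omega⟩⟩
    have hP : Nat.factorial (n + a - 1) / Nat.factorial (a - 1) = (n + a - 1).descFactorial n := by
      rw [Nat.descFactorial_eq_div (by omega), show n + a - 1 - n = a - 1 by omega]
    rw [hP]
    exact ListColoring.isLeast_listChromaticNumber_boxProd hn ListColoring.exists_coloring_top
      (ListColoring.not_colorable_top (by omega))
      (ListColoring.descFactorial_le_card_colorings_top _ n)
      fun A hA => hA ▸ ListColoring.card_colorings_top_const_le n A
  · rw [show 9 * (9 ^ l - 1) ^ 2 = (3 * (9 ^ l - 1)) ^ 2 by ring]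
    exact ListColoring.isLeast_listChromaticNumber_boxProd (k := 3) (a := 2) le_rfl
      (ListColoring.exists_coloring_oddCycle hl) (ListColoring.not_colorable_oddCycle hl)
      (ListColoring.le_card_colorings_oddCycle hl)
      fun A hA => (ListColoring.card_colorings_oddCycle_const hl hA).le
end
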